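/- Let L be a lattice. For every x ∈ L, d(δ_L(x)) = ε_L(x), where d is the transition function of 𝔐(L). -/

import Mathlib

/-!
If `x ∈ F` and `F ⊆ G`, then `x ∈ G`, so `x ∉ J` for every comaximal pair `(J, G)`. Conversely, if
`x ∉ F`, then `F` is disjoint from the principal ideal `↓x`, and this disjoint pair extends to a
comaximal pair: enlarge `F` to a filter `G` maximal among those disjoint from `↓x`, then enlarge
`↓x` to an ideal `J` maximal among those disjoint from `G`. Any filter strictly containing `G` meets
`↓x ⊆ J`, so `G` is also maximal against `J`. The pair `(J, G)` has `F ⊆ G` and `x ∈ J`.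
-/

/-- An ideal of a lattice: nonempty, downward closed, closed under finite joins. -/
def IsLatIdeal {L : Type*} [Lattice L] (I : Set L) : Prop :=
  I.Nonempty ∧ (∀ ⦃x y : L⦄, x ≤ y → y ∈ I → x ∈ I) ∧
    ∀ ⦃x : L⦄, x ∈ I → ∀ ⦃y : L⦄, y ∈ I → x ⊔ y ∈ I

/-- A filter of a lattice: nonempty, upward closed, closed under finite meets. -/
def IsLatFilter {L : Type*} [Lattice L] (F : Set L) : Prop :=
  F.Nonempty ∧ (∀ ⦃x y : L⦄, x ≤ y → x ∈ F → y ∈ F) ∧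
    ∀ ⦃x : L⦄, x ∈ F → ∀ ⦃y : L⦄, y ∈ F → x ⊓ y ∈ F

/-- A comaximal pair of a lattice. -/
def IsComaximalPair {L : Type*} [Lattice L] (I F : Set L) : Prop :=
  IsLatIdeal I ∧ IsLatFilter F ∧ I ∩ F = ∅ ∧
    (∀ J : Set L, IsLatIdeal J → I ⊂ J → (J ∩ F).Nonempty) ∧
    (∀ K : Set L, IsLatFilter K → F ⊂ K → (I ∩ K).Nonempty)

/-- 𝔐(L): the set (type) of comaximal pairs of L. -/
abbrev ComaxPairs (L : Type*) [Lattice L] :=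
  {p : Set L × Set L // IsComaximalPair p.1 p.2}

/-- δ_L(x) = {(I,F) ∈ 𝔐(L) : x ∉ I}. -/
def deltaL {L : Type*} [Lattice L] (x : L) : Set (ComaxPairs L) :=
  {p | x ∉ p.1.1}

/-- ε_L(x) = {(I,F) ∈ 𝔐(L) : x ∈ F}. -/
def epsL {L : Type*} [Lattice L] (x : L) : Set (ComaxPairs L) :=
  {p | x ∈ p.1.2}

/-- τ_L : the topology on 𝔐(L) generated by the subbasis {δ_L(x) : x ∈ L}. -/
def tauL (L : Type*) [Lattice L] : TopologicalSpace (ComaxPairs L) :=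
  TopologicalSpace.generateFrom (Set.range (deltaL (L := L)))

/-- σ_L : the topology on 𝔐(L) generated by the subbasis {ε_L(x) : x ∈ L}. -/
def sigmaL (L : Type*) [Lattice L] : TopologicalSpace (ComaxPairs L) :=
  TopologicalSpace.generateFrom (Set.range (epsL (L := L)))

/-- Distributivity of a lattice. -/
def IsDistrib (L : Type*) [Lattice L] : Prop :=
  ∀ x y z : L, x ⊓ (y ⊔ z) = (x ⊓ y) ⊔ (x ⊓ z)

/-- A prime ideal of a lattice. -/
def IsPrimeIdeal {L : Type*} [Lattice L] (P : Set L) : Prop :=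
  IsLatIdeal P ∧ P ≠ Set.univ ∧ ∀ x y : L, x ⊓ y ∈ P → x ∈ P ∨ y ∈ P

/-- The transition function d on subsets of 𝔐(L). -/
def dTrans {L : Type*} [Lattice L] (A : Set (ComaxPairs L)) : Set (ComaxPairs L) :=
  {p | ∀ q : ComaxPairs L, p.1.2 ⊆ q.1.2 → q ∈ A}

/-- The transition function i on subsets of 𝔐(L). -/
def iTrans {L : Type*} [Lattice L] (A : Set (ComaxPairs L)) : Set (ComaxPairs L) :=
  {p | ∃ q ∈ A, p.1.1 ⊆ q.1.1}

/-- The Zorn lemma for a family `P` of sets closed under unions of nonempty chains: a member `S`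
disjoint from `T` extends to a member maximal with respect to disjointness from `T`. -/
theorem exists_maximal_disjoint {X : Type*} {P : Set X → Prop}
    (hP : ∀ c : Set (Set X), (∀ s ∈ c, P s) → IsChain (· ⊆ ·) c → c.Nonempty → P (⋃₀ c))
    {S T : Set X} (hS : P S) (hST : Disjoint S T) :
    ∃ M, S ⊆ M ∧ P M ∧ Disjoint M T ∧ ∀ K, P K → M ⊂ K → (K ∩ T).Nonempty := by
  obtain ⟨M, hSM, hM⟩ := zorn_subset_nonempty {K | P K ∧ Disjoint K T}
    (fun c hc hchain hne ↦ ⟨⋃₀ c, ⟨hP c (fun s hs ↦ (hc hs).1) hchain hne,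
      Set.disjoint_sUnion_left.2 fun s hs ↦ (hc hs).2⟩, fun _ ↦ Set.subset_sUnion_of_mem⟩)
    S ⟨hS, hST⟩
  refine ⟨M, hSM, hM.prop.1, hM.prop.2, fun K hK hMK ↦ ?_⟩
  rw [← Set.not_disjoint_iff_nonempty_inter]
  exact fun hd ↦ hMK.2 (hM.le_of_ge ⟨hK, hd⟩ hMK.1)

theorem isLatIdeal_sUnion {L : Type*} [Lattice L] (c : Set (Set L)) (hc : ∀ s ∈ c, IsLatIdeal s)
    (hchain : IsChain (· ⊆ ·) c) (hne : c.Nonempty) : IsLatIdeal (⋃₀ c) := by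
  obtain ⟨s, hs⟩ := hne
  refine ⟨(hc s hs).1.mono (Set.subset_sUnion_of_mem hs), ?_, ?_⟩
  · rintro x y hxy ⟨t, ht, hy⟩
    exact ⟨t, ht, (hc t ht).2.1 hxy hy⟩
  · rintro x ⟨t, ht, hx⟩ y ⟨u, hu, hy⟩
    rcases hchain.total ht hu with h | h
    · exact ⟨u, hu, (hc u hu).2.2 (h hx) hy⟩
    · exact ⟨t, ht, (hc t ht).2.2 hx (h hy)⟩

theorem isLatFilter_sUnion {L : Type*} [Lattice L] (c : Set (Set L)) (hc : ∀ s ∈ c, IsLatFilter s)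
    (hchain : IsChain (· ⊆ ·) c) (hne : c.Nonempty) : IsLatFilter (⋃₀ c) := by
  obtain ⟨s, hs⟩ := hne
  refine ⟨(hc s hs).1.mono (Set.subset_sUnion_of_mem hs), ?_, ?_⟩
  · rintro x y hxy ⟨t, ht, hx⟩
    exact ⟨t, ht, (hc t ht).2.1 hxy hx⟩
  · rintro x ⟨t, ht, hx⟩ y ⟨u, hu, hy⟩
    rcases hchain.total ht hu with h | h
    · exact ⟨u, hu, (hc u hu).2.2 (h hx) hy⟩
    · exact ⟨t, ht, (hc t ht).2.2 hx (h hy)⟩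

theorem isLatIdeal_Iic {L : Type*} [Lattice L] (x : L) : IsLatIdeal (Set.Iic x) :=
  ⟨⟨x, le_rfl⟩, fun _ _ hab hb ↦ hab.trans hb, fun _ ha _ hb ↦ sup_le ha hb⟩

/-- Every disjoint ideal–filter pair extends to a comaximal pair. -/
theorem exists_comaximalPair {L : Type*} [Lattice L] {I F : Set L} (hI : IsLatIdeal I)
    (hF : IsLatFilter F) (hIF : Disjoint I F) :
    ∃ J G : Set L, I ⊆ J ∧ F ⊆ G ∧ IsComaximalPair J G := by
  obtain ⟨G, hFG, hG, hGI, hGmax⟩ := exists_maximal_disjoint isLatFilter_sUnion hF hIF.symm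
  obtain ⟨J, hIJ, hJ, hJG, hJmax⟩ := exists_maximal_disjoint isLatIdeal_sUnion hI hGI.symm
  refine ⟨J, G, hIJ, hFG, hJ, hG, hJG.inter_eq, hJmax, fun K hK hGK ↦ ?_⟩
  obtain ⟨y, hyK, hyI⟩ := hGmax K hK hGK
  exact ⟨y, hIJ hyI, hyK⟩

/-- d(δ_L(x)) = ε_L(x). -/
theorem dTrans_deltaL {L : Type*} [Lattice L] (x : L) :
    dTrans (deltaL x) = epsL x := by
  ext p
  constructor
  · intro hp
    by_contra hx
    have hdisj : Disjoint (Set.Iic x) p.1.2 :=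
      Set.disjoint_left.2 fun y hyx hy ↦ hx (p.2.2.1.2.1 hyx hy)
    obtain ⟨J, G, hJ, hG, hpair⟩ := exists_comaximalPair (isLatIdeal_Iic x) p.2.2.1 hdisj
    exact hp ⟨(J, G), hpair⟩ hG (hJ Set.self_mem_Iic)
  · intro hx q hq hxq
    exact Set.disjoint_left.1 (Set.disjoint_iff_inter_eq_empty.2 q.2.2.2.1) hxq (hq hx)
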